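/- For |r| < 1, define the mapping T_r on the space L^∞([0,∞)) of bounded measurable functions on [0,∞) with the supremum norm by (T_r F)(x) = P[W_1 ≤ x] + r/(1−r) − r ∫_x^∞ F(y−x) dF_X(y). Then for any two bounded measurable functions F₁, F₂ on [0,∞), ‖T_r F₁ − T_r F₂‖_∞ ≤ |r| · P[X > 0] · ‖F₁ − F₂‖_∞. In particular, since |r| < 1 and P[X > 0] < 1, T_r is a contraction mapping on L^∞([0,∞)) with contraction coefficient |r|·P[X > 0]. -/

import Mathlib

open MeasureTheory ProbabilityTheory

/-- The mapping `T_r` : `(T_r F)(x) = P[W_1 ≤ x] + r/(1−r) − r ∫_x^∞ F(y−x) dF_X(y)`,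
where `cdfW1 x = P[W_1 ≤ x]` and `ν` is the law of `X` (so that the
Stieltjes integral `∫_x^∞ · dF_X` is the integral over `(x,∞)` against `ν`). -/
noncomputable def lindleyTypeMap (ν : Measure ℝ) (cdfW1 : ℝ → ℝ) (r : ℝ)
    (F : ℝ → ℝ) (x : ℝ) : ℝ :=
  cdfW1 x + r / (1 - r) - r * ∫ y in Set.Ioi x, F (y - x) ∂ν

section ShiftedTail

variable {E : Type*} [NormedAddCommGroup E] {ν : Measure ℝ} [IsFiniteMeasure ν]

lemma integrableOn_comp_sub_Ioi [MeasurableSpace E] [OpensMeasurableSpace E]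
    [SecondCountableTopology E] {F : ℝ → E} (hF : Measurable ((Set.Ici 0).domRestrict F))
    (hFbdd : ∃ M, ∀ t, 0 ≤ t → ‖F t‖ ≤ M) (x : ℝ) :
    IntegrableOn (fun y ↦ F (y - x)) (Set.Ioi x) ν := by
  obtain ⟨M, hM⟩ := hFbdd
  have sub_nonneg_of_mem {y : ℝ} (hy : y ∈ Set.Ioi x) : 0 ≤ y - x := sub_nonneg.2 hy.le
  have measurable_shift :
      Measurable fun y : Set.Ioi x ↦ (⟨y - x, sub_nonneg_of_mem y.2⟩ : Set.Ici (0 : ℝ)) :=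
    (measurable_subtype_coe.sub_const x).subtype_mk
  have aemeasurable_comp : AEMeasurable (fun y ↦ F (y - x)) (ν.restrict (Set.Ioi x)) :=
    aemeasurable_restrict_of_measurable_subtype measurableSet_Ioi (hF.comp measurable_shift)
  exact Integrable.of_bound aemeasurable_comp.aestronglyMeasurable M <|
    ae_restrict_of_forall_mem measurableSet_Ioi fun y hy ↦ hM _ (sub_nonneg_of_mem hy)

lemma norm_setIntegral_comp_sub_Ioi_le [NormedSpace ℝ E] {G : ℝ → E} {C x : ℝ}
    (hG : ∀ t, 0 ≤ t → ‖G t‖ ≤ C) (hx : 0 ≤ x) :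
    ‖∫ y in Set.Ioi x, G (y - x) ∂ν‖ ≤ ν.real (Set.Ioi 0) * C := by
  have hC : 0 ≤ C := (norm_nonneg _).trans (hG 0 le_rfl)
  calc ‖∫ y in Set.Ioi x, G (y - x) ∂ν‖
      ≤ C * ν.real (Set.Ioi x) :=
        norm_setIntegral_le_of_norm_le_const (measure_lt_top _ _)
          fun y hy ↦ hG _ (sub_nonneg.2 (Set.mem_Ioi.1 hy).le)
    _ ≤ C * ν.real (Set.Ioi 0) :=
        mul_le_mul_of_nonneg_left (measureReal_mono (Set.Ioi_subset_Ioi hx)) hC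
    _ = ν.real (Set.Ioi 0) * C := mul_comm _ _

end ShiftedTail

section LindleyTypeMap

variable {ν : Measure ℝ} {F₁ F₂ : ℝ → ℝ} {x : ℝ}

lemma lindleyTypeMap_sub_lindleyTypeMap (cdfW1 : ℝ → ℝ) (r : ℝ)
    (hF₁ : IntegrableOn (fun y ↦ F₁ (y - x)) (Set.Ioi x) ν)
    (hF₂ : IntegrableOn (fun y ↦ F₂ (y - x)) (Set.Ioi x) ν) :
    lindleyTypeMap ν cdfW1 r F₁ x - lindleyTypeMap ν cdfW1 r F₂ x =
      -(r * ∫ y in Set.Ioi x, (F₁ - F₂) (y - x) ∂ν) := by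
  simp only [lindleyTypeMap, Pi.sub_apply, integral_sub hF₁ hF₂]
  ring

lemma abs_lindleyTypeMap_sub_lindleyTypeMap_le [IsFiniteMeasure ν] (cdfW1 : ℝ → ℝ) (r : ℝ) {C : ℝ}
    (hF₁ : IntegrableOn (fun y ↦ F₁ (y - x)) (Set.Ioi x) ν)
    (hF₂ : IntegrableOn (fun y ↦ F₂ (y - x)) (Set.Ioi x) ν)
    (hC : ∀ t, 0 ≤ t → |F₁ t - F₂ t| ≤ C) (hx : 0 ≤ x) :
    |lindleyTypeMap ν cdfW1 r F₁ x - lindleyTypeMap ν cdfW1 r F₂ x| ≤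
      |r| * ν.real (Set.Ioi 0) * C := by
  rw [lindleyTypeMap_sub_lindleyTypeMap cdfW1 r hF₁ hF₂, abs_neg, abs_mul, mul_assoc]
  gcongr
  exact norm_setIntegral_comp_sub_Ioi_le (G := F₁ - F₂) hC hx

theorem lindleyTypeMap_contraction_general [IsFiniteMeasure ν] (cdfW1 : ℝ → ℝ) {r : ℝ}
    (_hr : r ≠ 1) (hF₁ : Measurable ((Set.Ici 0).domRestrict F₁))
    (hF₂ : Measurable ((Set.Ici 0).domRestrict F₂))
    (hF₁bdd : ∃ M, ∀ t, 0 ≤ t → |F₁ t| ≤ M) (hF₂bdd : ∃ M, ∀ t, 0 ≤ t → |F₂ t| ≤ M) :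
    (⨆ x : Set.Ici (0 : ℝ), |lindleyTypeMap ν cdfW1 r F₁ x - lindleyTypeMap ν cdfW1 r F₂ x|) ≤
      |r| * ν.real (Set.Ioi 0) * ⨆ x : Set.Ici (0 : ℝ), |F₁ x - F₂ x| := by
  have bddAbove_sub : BddAbove (Set.range fun x : Set.Ici (0 : ℝ) ↦ |F₁ x - F₂ x|) := by
    obtain ⟨M₁, hM₁⟩ := hF₁bdd
    obtain ⟨M₂, hM₂⟩ := hF₂bdd
    refine ⟨M₁ + M₂, Set.forall_mem_range.2 fun x ↦ ?_⟩
    exact (abs_sub _ _).trans (add_le_add (hM₁ x x.2) (hM₂ x x.2))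
  refine ciSup_le fun x ↦ abs_lindleyTypeMap_sub_lindleyTypeMap_le cdfW1 r
    (integrableOn_comp_sub_Ioi hF₁ hF₁bdd x) (integrableOn_comp_sub_Ioi hF₂ hF₂bdd x) ?_ x.2
  exact fun t ht ↦ le_ciSup bddAbove_sub ⟨t, ht⟩

end LindleyTypeMap

/-- For `|r| < 1`, the mapping `T_r` on `L^∞([0,∞))` given by
`(T_r F)(x) = P[W_1 ≤ x] + r/(1−r) − r ∫_x^∞ F(y−x) dF_X(y)` satisfies
`‖T_r F₁ − T_r F₂‖_∞ ≤ |r| · P[X > 0] · ‖F₁ − F₂‖_∞` for all bounded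
measurable `F₁, F₂` on `[0,∞)`; in particular, since `|r| < 1` and
`P[X > 0] < 1`, it is a contraction with coefficient `|r| · P[X > 0]`. -/
theorem lindleyTypeMap_contraction
    {Ω : Type*} [MeasureSpace Ω] [IsProbabilityMeasure (ℙ : Measure Ω)]
    (X W1 : Ω → ℝ) (hX : Measurable X)
    (hX0 : 0 < ℙ {ω | X ω ≤ 0}) (hX1 : ℙ {ω | X ω ≤ 0} < 1)
    (r : ℝ) (hr : |r| < 1)
    (F₁ F₂ : ℝ → ℝ) (hF₁ : Measurable F₁) (hF₂ : Measurable F₂)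
    (hF₁bdd : ∃ M, ∀ x, |F₁ x| ≤ M) (hF₂bdd : ∃ M, ∀ x, |F₂ x| ≤ M) :
    (⨆ x : Set.Ici (0 : ℝ),
        |lindleyTypeMap (Measure.map X ℙ) (fun t => (ℙ {ω | W1 ω ≤ t}).toReal) r F₁ x -
         lindleyTypeMap (Measure.map X ℙ) (fun t => (ℙ {ω | W1 ω ≤ t}).toReal) r F₂ x|) ≤
      |r| * (ℙ {ω | 0 < X ω}).toReal * ⨆ x : Set.Ici (0 : ℝ), |F₁ x - F₂ x| := by
  have h_law : (Measure.map X ℙ).real (Set.Ioi 0) = (ℙ {ω | 0 < X ω}).toReal :=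
    map_measureReal_apply hX measurableSet_Ioi
  exact h_law ▸ lindleyTypeMap_contraction_general _ (abs_lt.1 hr).2.ne
    (hF₁.comp measurable_subtype_coe) (hF₂.comp measurable_subtype_coe)
    (hF₁bdd.imp fun _ h t _ ↦ h t) (hF₂bdd.imp fun _ h t _ ↦ h t)
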